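/- For all integers d ≥ 2 and n ≥ 1, the number of equivalence classes of d-dimensional extremal (0,1)-matrices of order n is at most n^{n·d·(d−1)} + 1. -/

import Mathlib

open Finset

/-- The sum of the entries of `k` over the hyperplane `Γ_{i,j}`. -/
def hypSum {d n : ℕ} (k : (Fin d → Fin n) → ℝ) (i : Fin d) (j : Fin n) : ℝ :=
  ∑ α ∈ Finset.univ.filter (fun α : Fin d → Fin n => α i = j), k α

/-- `k` is a polyplex of weight `W` in the `d`-dimensional (0,1)-matrix `A` of order `n`. -/
def IsPolyplex {d n : ℕ} (A : (Fin d → Fin n) → Bool) (k : (Fin d → Fin n) → ℝ) (W : ℝ) : Prop :=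
  (∀ α, 0 ≤ k α) ∧ (∀ α, A α = false → k α = 0) ∧
  (∀ i j, hypSum k i j ≤ 1) ∧ (∑ α, k α) = W

/-- `k` is a polydiagonal in `A`: a nonnegative weighting of the support whose sum over
every hyperplane equals `1`. -/
def IsPolydiagonal {d n : ℕ} (A : (Fin d → Fin n) → Bool) (k : (Fin d → Fin n) → ℝ) : Prop :=
  (∀ α, 0 ≤ k α) ∧ (∀ α, A α = false → k α = 0) ∧ (∀ i j, hypSum k i j = 1)

def HasPolydiagonal {d n : ℕ} (A : (Fin d → Fin n) → Bool) : Prop :=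
  ∃ k, IsPolydiagonal A k

/-- The matrix obtained from `A` by additionally setting the entry at `β` to `1`. -/
def addEntry {d n : ℕ} (A : (Fin d → Fin n) → Bool) (β : Fin d → Fin n) :
    (Fin d → Fin n) → Bool :=
  fun α => if α = β then true else A α

/-- `A` is extremal: it has no polydiagonal, and adding any entry creates one. -/
def IsExtremal {d n : ℕ} (A : (Fin d → Fin n) → Bool) : Prop :=
  ¬ HasPolydiagonal A ∧ ∀ β, A β = false → HasPolydiagonal (addEntry A β)

/-- `Λ` is a hyperplane cover of `A`. -/
def IsCover {d n : ℕ} (A : (Fin d → Fin n) → Bool) (Λ : Fin d → Fin n → ℝ) : Prop :=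
  (∀ i j, 0 ≤ Λ i j) ∧ ∀ α, A α = true → 1 ≤ ∑ i, Λ i (α i)

/-- The weight of a hyperplane cover. -/
def coverWeight {d n : ℕ} (Λ : Fin d → Fin n → ℝ) : ℝ := ∑ i, ∑ j, Λ i j

/-- `Λ` is an optimal hyperplane cover of `A`: a cover of minimum weight. -/
def IsOptimalCover {d n : ℕ} (A : (Fin d → Fin n) → Bool) (Λ : Fin d → Fin n → ℝ) : Prop :=
  IsCover A Λ ∧ ∀ Λ', IsCover A Λ' → coverWeight Λ ≤ coverWeight Λ'

/-- `A` is a threshold matrix. -/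
def IsThreshold {d n : ℕ} (A : (Fin d → Fin n) → Bool) : Prop :=
  ∃ Λ : Fin d → Fin n → ℝ, (∀ i j, 0 ≤ Λ i j) ∧
    ∀ α, (A α = true ↔ 1 ≤ ∑ i, Λ i (α i))

/-- `A` and `B` are equivalent: `B` is obtained from `A` by permuting directions and
permuting parallel hyperplanes, i.e. `B(α) = A(β)` where `β (π i) = σ i (α i)`. -/
def MatEquiv {d n : ℕ} (A B : (Fin d → Fin n) → Bool) : Prop :=
  ∃ (π : Equiv.Perm (Fin d)) (σ : Fin d → Equiv.Perm (Fin n)),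
    ∀ α, B α = A (fun j => σ (π.symm j) (α (π.symm j)))

/-- The rate of the hyperplane `Γ_{i,j}` of `A`: the number of ones it contains. -/
def rate {d n : ℕ} (A : (Fin d → Fin n) → Bool) (i : Fin d) (j : Fin n) : ℕ :=
  (Finset.univ.filter (fun α : Fin d → Fin n => A α = true ∧ α i = j)).card

/-- The profile of `A`: the multiset of the rates of all its `d·n` hyperplanes. -/
def profile {d n : ℕ} (A : (Fin d → Fin n) → Bool) : Multiset ℕ :=
  (Finset.univ : Finset (Fin d × Fin n)).val.map (fun p => rate A p.1 p.2)

/-!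
By linear programming duality, a matrix `A` has no polydiagonal if and only if some real weighting
of the hyperplanes has negative total weight although the hyperplanes through each index in the
support of `A` have nonnegative total weight. The weighting comes from separating the constant array
`1 / n` from the polytope of hyperplane sums of the probability weightings of the support.
If `A` is extremal, maximality forces its support to consist of *all* indices of nonnegative weight.
Among all sets of indices this one maximises the total weight, and every other maximiser is
contained in it. The total weight of the support depends only on the rates of the hyperplanes, so
two extremal matrices with the same rates have supports contained in each other and coincide.

A rate is at most `n ^ (d - 1)`. If all `n * d` rates are positive, there are at most
`(n ^ (d - 1)) ^ (n * d)` possibilities for them. If some rate vanishes, then by maximality `A` is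
the complement of a hyperplane, and all such complements are equivalent: this is the extra `1`.
-/

section General

theorem map_eq_sum_mul_map_single {ι κ R : Type*} [Fintype ι] [Fintype κ] [DecidableEq ι]
    [DecidableEq κ] [CommSemiring R] (f : (ι → κ → R) →ₗ[R] R) (x : ι → κ → R) :
    f x = ∑ i, ∑ j, x i j * f (Pi.single i (Pi.single j 1)) := by
  have x_eq : x = ∑ i, ∑ j, x i j • Pi.single i (Pi.single j (1 : R)) := by
    ext i j
    simp [Finset.sum_apply, Pi.single_apply, ite_apply]
  conv_lhs => rw [x_eq]
  simp only [map_sum, map_smul, smul_eq_mul]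

theorem subset_of_sum_le_sum_of_nonneg_of_neg {ι M : Type*} [AddCommMonoid M] [PartialOrder M]
    [IsOrderedCancelAddMonoid M] {s t : Finset ι} {w : ι → M} (nonneg : ∀ a ∈ s, 0 ≤ w a)
    (neg : ∀ a, a ∉ s → w a < 0) (hst : ∑ a ∈ s, w a ≤ ∑ a ∈ t, w a) : t ⊆ s := by
  classical
  by_contra hts
  refine hst.not_gt ?_
  calc ∑ a ∈ t, w a = ∑ a ∈ t \ s, w a + ∑ a ∈ t ∩ s, w a := by
        rw [add_comm, Finset.sum_inter_add_sum_sdiff]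
    _ < 0 + ∑ a ∈ t ∩ s, w a := by
        gcongr
        exact Finset.sum_neg (fun a ha => neg a (Finset.mem_sdiff.1 ha).2)
          (Finset.sdiff_nonempty.2 hts)
    _ = ∑ a ∈ t ∩ s, w a := zero_add _
    _ ≤ ∑ a ∈ s, w a :=
        Finset.sum_le_sum_of_subset_of_nonneg Finset.inter_subset_right fun a ha _ => nonneg a ha

theorem card_quot_le_of_imp {X Y : Type*} [Finite Y] {r : X → X → Prop} (f : X → Y)
    (hf : ∀ x y, f x = f y → r x y) : Nat.card (Quot r) ≤ Nat.card Y := by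
  refine Nat.card_le_card_of_injective (fun q : Quot r => f q.out) fun p q hpq => ?_
  rw [← Quot.out_eq p, ← Quot.out_eq q]
  exact Quot.sound (hf _ _ hpq)

end General

section Pairing

variable {d n : ℕ}

/-- The total weight `∑ᵢ Λ(i, αᵢ)` of the `d` hyperplanes through the index `α`, for a real
(possibly negative) weighting `Λ` of the hyperplanes `Γ_{i,j}`. -/
def indexWeight (Λ : Fin d → Fin n → ℝ) (α : Fin d → Fin n) : ℝ := ∑ i, Λ i (α i)

theorem sum_mul_indexWeight (k : (Fin d → Fin n) → ℝ) (Λ : Fin d → Fin n → ℝ) :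
    ∑ α, k α * indexWeight Λ α = ∑ i, ∑ j, hypSum k i j * Λ i j := by
  simp only [indexWeight, Finset.mul_sum]
  rw [Finset.sum_comm]
  refine Finset.sum_congr rfl fun i _ => ?_
  rw [← Finset.sum_fiberwise Finset.univ (fun α : Fin d → Fin n => α i)]
  refine Finset.sum_congr rfl fun j _ => ?_
  rw [hypSum, Finset.sum_mul]
  refine Finset.sum_congr rfl fun α hα => ?_
  rw [(Finset.mem_filter.1 hα).2]

theorem indexWeight_sub_const (Λ : Fin d → Fin n → ℝ) (c : ℝ) (α : Fin d → Fin n) :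
    indexWeight (fun i j => Λ i j - c) α = indexWeight Λ α - d * c := by
  simp [indexWeight]

theorem coverWeight_sub_const (Λ : Fin d → Fin n → ℝ) (c : ℝ) :
    coverWeight (fun i j => Λ i j - c) = coverWeight Λ - d * (n * c) := by
  simp [coverWeight]

theorem hypSum_ite_eq_rate (A : (Fin d → Fin n) → Bool) (i : Fin d) (j : Fin n) :
    hypSum (fun α => if A α = true then 1 else 0) i j = rate A i j := by
  rw [hypSum, rate, Finset.sum_boole, Finset.filter_filter]
  simp only [and_comm]

theorem sum_indexWeight_eq_sum_rate_mul (A : (Fin d → Fin n) → Bool) (Λ : Fin d → Fin n → ℝ) :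
    ∑ α with A α = true, indexWeight Λ α = ∑ i, ∑ j, rate A i j * Λ i j := by
  rw [Finset.sum_filter]
  simp only [← hypSum_ite_eq_rate, ← sum_mul_indexWeight, ite_mul, one_mul, zero_mul]

end Pairing

section Duality

variable {d n : ℕ} {A B : (Fin d → Fin n) → Bool}

theorem HasPolydiagonal.mono (hA : HasPolydiagonal A) (hAB : ∀ α, A α = true → B α = true) :
    HasPolydiagonal B := by
  obtain ⟨k, k_nonneg, k_supp, k_sum⟩ := hA
  refine ⟨k, k_nonneg, fun α hα => k_supp α ?_, k_sum⟩
  exact Bool.eq_false_iff.2 fun h => Bool.eq_false_iff.1 hα (hAB α h)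

theorem pos_of_not_hasPolydiagonal (hA : ¬ HasPolydiagonal A) : 0 < d ∧ 0 < n := by
  by_contra hdn
  refine hA ⟨0, fun _ => le_rfl, fun _ _ => rfl, fun i j => ?_⟩
  exact absurd ⟨i.pos, j.pos⟩ hdn

/-- The linear map sending a weighting `k` of the indices to the array of its hyperplane sums. -/
def hypSumLinear (d n : ℕ) : ((Fin d → Fin n) → ℝ) →ₗ[ℝ] (Fin d → Fin n → ℝ) where
  toFun := hypSum
  map_add' k l := by ext; simp [hypSum, Finset.sum_add_distrib]
  map_smul' c k := by ext; simp [hypSum, Finset.mul_sum]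

/-- The polytope of hyperplane sums of the probability weightings of the support of `A`. -/
def hypSumPolytope (A : (Fin d → Fin n) → Bool) : Set (Fin d → Fin n → ℝ) :=
  convexHull ℝ ((fun α => hypSumLinear d n (Pi.single α 1)) '' {α | A α = true})

theorem exists_of_mem_hypSumPolytope {x : Fin d → Fin n → ℝ} (hx : x ∈ hypSumPolytope A) :
    ∃ k : (Fin d → Fin n) → ℝ,
      (∀ α, 0 ≤ k α) ∧ (∀ α, A α = false → k α = 0) ∧ hypSum k = x := by
  let weightings : Set ((Fin d → Fin n) → ℝ) := {k | (∀ α, 0 ≤ k α) ∧ ∀ α, A α = false → k α = 0}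
  have convex_weightings : Convex ℝ weightings := by
    rintro k ⟨hk, hk'⟩ l ⟨hl, hl'⟩ a b ha hb -
    refine ⟨fun α => ?_, fun α hα => ?_⟩
    · exact add_nonneg (mul_nonneg ha (hk α)) (mul_nonneg hb (hl α))
    · simp [hk' α hα, hl' α hα]
  have single_mem : (fun α => Pi.single α 1) '' {α | A α = true} ⊆ weightings := by
    rintro _ ⟨α, hα, rfl⟩
    refine ⟨(single_mem_stdSimplex ℝ α).1, fun β hβ => Pi.single_eq_of_ne ?_ 1⟩
    rintro rfl
    exact Bool.eq_false_iff.1 hβ hα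
  rw [hypSumPolytope, ← Set.image_image, ← LinearMap.image_convexHull] at hx
  obtain ⟨k, hk, rfl⟩ := hx
  obtain ⟨k_nonneg, k_supp⟩ := convexHull_min single_mem convex_weightings hk
  exact ⟨k, k_nonneg, k_supp, rfl⟩

theorem hasPolydiagonal_of_const_mem_hypSumPolytope
    (hA : (fun _ _ => (n : ℝ)⁻¹) ∈ hypSumPolytope A) : HasPolydiagonal A := by
  obtain ⟨k, k_nonneg, k_supp, k_sum⟩ := exists_of_mem_hypSumPolytope hA
  refine ⟨(n : ℝ) • k, fun α => mul_nonneg n.cast_nonneg (k_nonneg α),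
    fun α hα => by simp [k_supp α hα], fun i j => ?_⟩
  have hn : (n : ℝ) ≠ 0 := Nat.cast_ne_zero.2 j.pos.ne'
  calc hypSum ((n : ℝ) • k) i j = n * hypSum k i j := by simp [hypSum, Finset.mul_sum]
    _ = 1 := by rw [k_sum, mul_inv_cancel₀ hn]

theorem exists_separating_weights (hA : (fun _ _ => (n : ℝ)⁻¹) ∉ hypSumPolytope A) :
    ∃ (Λ : Fin d → Fin n → ℝ) (u : ℝ),
      (n : ℝ)⁻¹ * coverWeight Λ < u ∧ ∀ α, A α = true → u < indexWeight Λ α := by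
  have isClosed_polytope : IsClosed (hypSumPolytope A) :=
    ((Set.toFinite _).image _).isClosed_convexHull ℝ
  obtain ⟨f, u, f_const_lt, lt_f⟩ :=
    geometric_hahn_banach_point_closed (convex_convexHull ℝ _) isClosed_polytope hA
  have f_eq := map_eq_sum_mul_map_single (f : (Fin d → Fin n → ℝ) →ₗ[ℝ] ℝ)
  simp only [ContinuousLinearMap.coe_coe] at f_eq
  refine ⟨fun i j => f (Pi.single i (Pi.single j 1)), u, ?_, fun α hα => ?_⟩
  · rw [f_eq] at f_const_lt
    simpa only [coverWeight, Finset.mul_sum] using f_const_lt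
  · calc u < f (hypSumLinear d n (Pi.single α 1)) := lt_f _ (subset_convexHull ℝ _ ⟨α, hα, rfl⟩)
      _ = ∑ β, (Pi.single α 1 : (Fin d → Fin n) → ℝ) β * indexWeight _ β :=
          (f_eq _).trans (sum_mul_indexWeight _ _).symm
      _ = indexWeight _ α := by simp [Pi.single_apply]

theorem exists_coverWeight_neg_of_not_hasPolydiagonal (hA : ¬ HasPolydiagonal A) :
    ∃ Λ : Fin d → Fin n → ℝ, coverWeight Λ < 0 ∧ ∀ α, A α = true → 0 ≤ indexWeight Λ α := by
  obtain ⟨Λ, u, coverWeight_lt, lt_indexWeight⟩ :=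
    exists_separating_weights (mt hasPolydiagonal_of_const_mem_hypSumPolytope hA)
  obtain ⟨hd, hn⟩ := pos_of_not_hasPolydiagonal hA
  have hd' : (d : ℝ) ≠ 0 := Nat.cast_ne_zero.2 hd.ne'
  -- Subtracting `u / d` from every weight moves the separating level from `u` to `0`.
  refine ⟨fun i j => Λ i j - u / d, ?_, fun α hα => ?_⟩
  · rw [inv_mul_lt_iff₀ (Nat.cast_pos.2 hn)] at coverWeight_lt
    rw [coverWeight_sub_const, mul_left_comm, mul_div_cancel₀ u hd']
    exact sub_neg.2 coverWeight_lt
  · rw [indexWeight_sub_const, mul_div_cancel₀ u hd']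
    exact sub_nonneg.2 (lt_indexWeight α hα).le

theorem not_hasPolydiagonal_of_coverWeight_neg {Λ : Fin d → Fin n → ℝ} (hΛ : coverWeight Λ < 0)
    (hA : ∀ α, A α = true → 0 ≤ indexWeight Λ α) : ¬ HasPolydiagonal A := by
  rintro ⟨k, k_nonneg, k_supp, k_sum⟩
  have sum_eq : ∑ α, k α * indexWeight Λ α = coverWeight Λ := by
    simp only [sum_mul_indexWeight, k_sum, one_mul, coverWeight]
  refine hΛ.not_ge (sum_eq ▸ Finset.sum_nonneg fun α _ => ?_)
  cases hα : A α with
  | false => rw [k_supp α hα, zero_mul]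
  | true => exact mul_nonneg (k_nonneg α) (hA α hα)

end Duality

section Extremal

variable {d n : ℕ} {A B : (Fin d → Fin n) → Bool}

theorem IsExtremal.eq_of_imp (hA : IsExtremal A) (hB : ¬ HasPolydiagonal B)
    (hAB : ∀ α, A α = true → B α = true) : A = B := by
  funext β
  refine Bool.eq_iff_iff.2 ⟨hAB β, fun hBβ => ?_⟩
  by_contra hAβ
  refine hB ((hA.2 β (Bool.eq_false_iff.2 hAβ)).mono fun α hα => ?_)
  by_cases hαβ : α = β
  · rwa [hαβ]
  · exact hAB α (by simpa [addEntry, hαβ] using hα)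

theorem IsExtremal.exists_eq_true_iff_indexWeight_nonneg (hA : IsExtremal A) :
    ∃ Λ : Fin d → Fin n → ℝ, ∀ α, A α = true ↔ 0 ≤ indexWeight Λ α := by
  obtain ⟨Λ, hΛ, hAΛ⟩ := exists_coverWeight_neg_of_not_hasPolydiagonal hA.1
  have A_eq : A = fun α => decide (0 ≤ indexWeight Λ α) :=
    hA.eq_of_imp (not_hasPolydiagonal_of_coverWeight_neg hΛ fun α => of_decide_eq_true)
      fun α hα => decide_eq_true (hAΛ α hα)
  exact ⟨Λ, fun α => by rw [A_eq, decide_eq_true_iff]⟩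

theorem IsExtremal.eq_of_rate_eq (hA : IsExtremal A) (hB : IsExtremal B)
    (hAB : ∀ i j, rate A i j = rate B i j) : A = B := by
  obtain ⟨Λ, hΛ⟩ := hA.exists_eq_true_iff_indexWeight_nonneg
  have sum_eq : ∑ α with A α = true, indexWeight Λ α = ∑ α with B α = true, indexWeight Λ α := by
    simp only [sum_indexWeight_eq_sum_rate_mul, hAB]
  have support_subset : univ.filter (B · = true) ⊆ univ.filter (A · = true) :=
    subset_of_sum_le_sum_of_nonneg_of_neg (w := indexWeight Λ)
      (fun α hα => (hΛ α).1 (Finset.mem_filter_univ α |>.1 hα))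
      (fun α hα => by simpa [hΛ] using hα) sum_eq.le
  refine (hB.eq_of_imp hA.1 fun α hα => ?_).symm
  simpa using support_subset (Finset.mem_filter_univ α |>.2 hα)

/-- The `(0,1)`-matrix whose zeros are exactly the indices in the hyperplane `Γ_{i,j}`. -/
def hyperplaneCompl (i : Fin d) (j : Fin n) : (Fin d → Fin n) → Bool := fun α => decide (α i ≠ j)

theorem not_hasPolydiagonal_hyperplaneCompl (i : Fin d) (j : Fin n) :
    ¬ HasPolydiagonal (hyperplaneCompl i j) := by
  rintro ⟨k, -, k_supp, k_sum⟩
  have sum_eq_zero : hypSum k i j = 0 :=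
    Finset.sum_eq_zero fun α hα => k_supp α (by simpa [hyperplaneCompl] using hα)
  exact zero_ne_one (sum_eq_zero.symm.trans (k_sum i j))

theorem IsExtremal.eq_hyperplaneCompl (hA : IsExtremal A) {i : Fin d} {j : Fin n}
    (hij : rate A i j = 0) : A = hyperplaneCompl i j := by
  refine hA.eq_of_imp (not_hasPolydiagonal_hyperplaneCompl i j) fun α hα => decide_eq_true ?_
  rw [rate, Finset.card_eq_zero, Finset.filter_eq_empty_iff] at hij
  exact fun hαij => hij (Finset.mem_univ α) ⟨hα, hαij⟩

theorem matEquiv_hyperplaneCompl (i i' : Fin d) (j j' : Fin n) :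
    MatEquiv (hyperplaneCompl i j) (hyperplaneCompl i' j') := by
  refine ⟨Equiv.swap i i', fun _ => Equiv.swap j j', fun α => ?_⟩
  simp [hyperplaneCompl, Equiv.swap_apply_eq_iff]

end Extremal

section Counting

variable {d n : ℕ} {A B : (Fin d → Fin n) → Bool}

theorem MatEquiv.refl (A : (Fin d → Fin n) → Bool) : MatEquiv A A :=
  ⟨1, fun _ => 1, fun _ => rfl⟩

theorem rate_le_pow (A : (Fin d → Fin n) → Bool) (i : Fin d) (j : Fin n) :
    rate A i j ≤ n ^ (d - 1) :=
  calc rate A i j ≤ #{α : Fin d → Fin n | α i = j} :=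
        Finset.card_le_card (Finset.monotone_filter_right _ fun _ _ => And.right)
    _ = n ^ (d - 1) := by
        simpa using Fintype.card_filter_piFinset_const_eq_of_mem Finset.univ i (Finset.mem_univ j)

/-- The array of rates of `A` if none of them vanishes, and `none` otherwise. On extremal matrices
this determines the equivalence class. -/
def rateCode (A : (Fin d → Fin n) → Bool) :
    Option (Fin d × Fin n → Finset.Icc 1 (n ^ (d - 1))) :=
  if hA : ∀ i j, rate A i j ≠ 0 then
    some fun p => ⟨rate A p.1 p.2,
      Finset.mem_Icc.2 ⟨Nat.one_le_iff_ne_zero.2 (hA p.1 p.2), rate_le_pow A p.1 p.2⟩⟩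
  else none

theorem rateCode_eq_none_iff : rateCode A = none ↔ ∃ i j, rate A i j = 0 := by
  simp [rateCode]

theorem rate_eq_of_rateCode_eq (hAB : rateCode A = rateCode B) (hA : ∀ i j, rate A i j ≠ 0)
    (i : Fin d) (j : Fin n) : rate A i j = rate B i j := by
  have hB : ∀ i j, rate B i j ≠ 0 := by
    by_contra hB
    rw [rateCode, rateCode, dif_pos hA, dif_neg hB] at hAB
    cases hAB
  rw [rateCode, rateCode, dif_pos hA, dif_pos hB] at hAB
  exact congrArg Subtype.val (congrFun (Option.some.inj hAB) (i, j))

theorem IsExtremal.matEquiv_of_rateCode_eq (hA : IsExtremal A) (hB : IsExtremal B)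
    (hAB : rateCode A = rateCode B) : MatEquiv A B := by
  by_cases hA₀ : ∃ i j, rate A i j = 0
  · obtain ⟨i', j', hij'⟩ := rateCode_eq_none_iff.1 (hAB ▸ rateCode_eq_none_iff.2 hA₀)
    obtain ⟨i, j, hij⟩ := hA₀
    rw [hA.eq_hyperplaneCompl hij, hB.eq_hyperplaneCompl hij']
    exact matEquiv_hyperplaneCompl i i' j j'
  · push Not at hA₀
    exact hA.eq_of_rate_eq hB (rate_eq_of_rateCode_eq hAB hA₀) ▸ MatEquiv.refl A

theorem card_rateCode_codomain (d n : ℕ) :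
    Nat.card (Option (Fin d × Fin n → Finset.Icc 1 (n ^ (d - 1)))) =
      n ^ (n * d * (d - 1)) + 1 := by
  simp only [Nat.card_eq_fintype_card, Fintype.card_option, Fintype.card_fun, Fintype.card_prod,
    Fintype.card_fin, Fintype.card_coe, Nat.card_Icc, Nat.add_sub_cancel, ← pow_mul]
  ring_nf

end Counting

/-- The number of equivalence classes of d-dimensional extremal matrices of order n is at
most n^(n d (d-1)) + 1. -/
theorem stmt_7 (d n : ℕ) (hd : 2 ≤ d) (hn : 1 ≤ n) :
    Nat.card (Quot (fun A B : {A : (Fin d → Fin n) → Bool // IsExtremal A} =>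
      MatEquiv A.1 B.1)) ≤ n ^ (n * d * (d - 1)) + 1 := by
  rw [← card_rateCode_codomain]
  exact card_quot_le_of_imp (fun A => rateCode A.1) fun A B hAB =>
    A.2.matEquiv_of_rateCode_eq B.2 hAB
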